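/- Let τ be a substitution over A and x ∈ A^ℕ, L > 0 with |τ(x_i)| ≥ L for every i ∈ ℕ. Then for every y ∈ A^ℕ, 𝔡_L(τ̄(x), τ̄(y)) ≤ (‖τ‖_max/L)·𝔡_L(x,y). Consequently, if there exist constants ρ, α, β > 0 such that |τ^t(a)| ≤ α·ρ^t for every letter a ∈ A and every t ∈ ℕ, and |τ^t(x_i)| ≥ β·ρ^t for every i ∈ ℕ and every t ∈ ℕ, then for every y ∈ A^ℕ and every t ∈ ℕ, 𝔡_L(τ̄^t(x), τ̄^t(y)) ≤ (α/β)·𝔡_L(x,y); in particular x is an equicontinuous point of τ̄ in the Feldman space. -/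

import Mathlib

open Filter

/-- The finite factor `x_[i, i+n)` of the infinite word `x`. -/
def factor {A : Type*} (x : ℕ → A) (i n : ℕ) : List A := List.ofFn (fun k : Fin n => x (i + k))

/-- The shift map `σ` on infinite words. -/
def shift {A : Type*} (x : ℕ → A) : ℕ → A := fun i => x (i + 1)
/-- The maximal length of a common (not necessarily contiguous) subsequence of `u` and `v`. -/
noncomputable def lcs {A : Type*} (u v : List A) : ℕ :=
  sSup {n | ∃ w : List A, w.length = n ∧ w.Sublist u ∧ w.Sublist v}

/-- The (halved) Levenshtein distance `d_L(u,v) = (|u|+|v|)/2 - ℓ(u,v)`. -/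
noncomputable def levD {A : Type*} (u v : List A) : ℝ :=
  ((u.length : ℝ) + v.length) / 2 - lcs u v

/-- The Feldman pseudometric `𝔡_L`. -/
noncomputable def feld {A : Type*} (x y : ℕ → A) : ℝ :=
  limsup (fun l : ℕ => levD (factor x 0 l) (factor y 0 l) / l) atTop

/-- The extension of a substitution `τ` to finite words. -/
def tauStar {A : Type*} (τ : A → List A) (u : List A) : List A := (u.map τ).flatten

/-- The iterated substitution `τ^t`, as a map from letters to words. -/
def tauPow {A : Type*} (τ : A → List A) : ℕ → A → List A
  | 0, a => [a]
  | t + 1, a => tauStar τ (tauPow τ t a)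

/-- The substitution cocycle `∑_{j<n} |τ(z_j)|`. -/
def subCocycle {A : Type*} (τ : A → List A) (z : ℕ → A) (n : ℕ) : ℕ :=
  ∑ j ∈ Finset.range n, (τ (z j)).length

/-! Let `w` be a longest common subsequence of the prefixes `u`, `v` of length `l` of `x`, `y`. Then
`τ(w)` is a common subsequence of `τ(u)` and `τ(v)`, and it omits at most `‖τ‖_max · (l - |w|)`
letters of each, that is, `‖τ‖_max · d_L(u, v)`. Choosing `l` with `|τ(u)| ≤ N < |τ(u)| + ‖τ‖_max`
transports this bound to the prefixes of length `N` of `τ̄(x)` and `τ̄(y)`, up to an additive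
constant, and `|τ(u)| ≥ L l` gives `l ≤ N / L`. The iterate `τ^t` is again a substitution, with
constants `α ρ^t` and `β ρ^t` in place of `‖τ‖_max` and `L`, and `ρ^t` cancels from their ratio. -/

section Factor

variable {A : Type*}

@[simp]
theorem length_factor (x : ℕ → A) (i n : ℕ) : (factor x i n).length = n := by
  simp [factor]

@[simp]
theorem factor_zero (x : ℕ → A) (i : ℕ) : factor x i 0 = [] := by
  simp [factor]

theorem factor_add (x : ℕ → A) (i m n : ℕ) :
    factor x i (m + n) = factor x i m ++ factor x (i + m) n := by
  simp [factor, List.ofFn_add, Nat.add_assoc]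

theorem factor_succ (x : ℕ → A) (i n : ℕ) : factor x i (n + 1) = factor x i n ++ [x (i + n)] := by
  rw [factor_add]
  simp [factor]

theorem factor_sublist_factor (x : ℕ → A) (i : ℕ) {m n : ℕ} (h : m ≤ n) :
    (factor x i m).Sublist (factor x i n) := by
  obtain ⟨k, rfl⟩ := Nat.exists_eq_add_of_le h
  rw [factor_add]
  exact List.sublist_append_left _ _

theorem take_factor (x : ℕ → A) (i m n : ℕ) :
    (factor x i n).take m = factor x i (min m n) := by
  rcases le_total n m with h | h
  · rw [min_eq_right h, List.take_of_length_le (by simpa using h)]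
  · obtain ⟨k, rfl⟩ := Nat.exists_eq_add_of_le h
    rw [min_eq_left h, factor_add, List.take_left' (length_factor x i m)]

end Factor

section CommonSubsequence

variable {A : Type*}

theorem bddAbove_length_commonSubsequence (u v : List A) :
    BddAbove {n | ∃ w : List A, w.length = n ∧ w.Sublist u ∧ w.Sublist v} := by
  refine ⟨u.length, ?_⟩
  rintro _ ⟨w, rfl, hwu, -⟩
  exact hwu.length_le

theorem length_le_lcs {u v w : List A} (hwu : w.Sublist u) (hwv : w.Sublist v) :
    w.length ≤ lcs u v :=
  le_csSup (bddAbove_length_commonSubsequence u v) ⟨w, rfl, hwu, hwv⟩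

theorem exists_sublist_length_eq_lcs (u v : List A) :
    ∃ w : List A, w.length = lcs u v ∧ w.Sublist u ∧ w.Sublist v :=
  Nat.sSup_mem (s := {n | ∃ w : List A, w.length = n ∧ w.Sublist u ∧ w.Sublist v})
    ⟨0, [], rfl, List.nil_sublist u, List.nil_sublist v⟩ (bddAbove_length_commonSubsequence u v)

theorem lcs_comm (u v : List A) : lcs u v = lcs v u := by
  simp only [lcs, and_comm]

theorem lcs_le_length_left (u v : List A) : lcs u v ≤ u.length := by
  obtain ⟨w, hw, hwu, -⟩ := exists_sublist_length_eq_lcs u v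
  exact hw ▸ hwu.length_le

theorem lcs_le_length_right (u v : List A) : lcs u v ≤ v.length :=
  lcs_comm u v ▸ lcs_le_length_left v u

theorem lcs_mono {u u' v v' : List A} (hu : u.Sublist u') (hv : v.Sublist v') :
    lcs u v ≤ lcs u' v' := by
  obtain ⟨w, hw, hwu, hwv⟩ := exists_sublist_length_eq_lcs u v
  exact hw ▸ length_le_lcs (hwu.trans hu) (hwv.trans hv)

theorem lcs_le_lcs_take_add (u v : List A) (n : ℕ) :
    lcs u v ≤ lcs u (v.take n) + (v.length - n) := by
  obtain ⟨w, hw, hwu, hwv⟩ := exists_sublist_length_eq_lcs u v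
  rw [← List.take_append_drop n v, List.sublist_append_iff] at hwv
  obtain ⟨w₁, w₂, rfl, hw₁, hw₂⟩ := hwv
  have hw₁_le : w₁.length ≤ lcs u (v.take n) :=
    length_le_lcs ((List.sublist_append_left w₁ w₂).trans hwu) hw₁
  have hw₂_le : w₂.length ≤ v.length - n := List.length_drop ▸ hw₂.length_le
  rw [← hw, List.length_append]
  exact Nat.add_le_add hw₁_le hw₂_le

end CommonSubsequence

section Levenshtein

variable {A : Type*}

theorem levD_nonneg (u v : List A) : 0 ≤ levD u v := by
  have hu : (lcs u v : ℝ) ≤ u.length := mod_cast lcs_le_length_left u v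
  have hv : (lcs u v : ℝ) ≤ v.length := mod_cast lcs_le_length_right u v
  unfold levD
  linarith

theorem levD_factor (x y : ℕ → A) (i j n : ℕ) :
    levD (factor x i n) (factor y j n) = n - lcs (factor x i n) (factor y j n) := by
  simp [levD]

theorem levD_factor_le (x y : ℕ → A) (i j n : ℕ) : levD (factor x i n) (factor y j n) ≤ n := by
  simp [levD_factor]

/-- Estimating the truncation of `q` to length `N` through the common subsequence, rather than by
the triangle inequality for `levD`, is what avoids a factor `2` in the final constant. -/
theorem levD_factor_le_max_length_sub_lcs {X Y : ℕ → A} {p q : List A} {N : ℕ}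
    (hX : factor X 0 p.length = p) (hY : factor Y 0 q.length = q) (hp : p.length ≤ N) :
    levD (factor X 0 N) (factor Y 0 N) ≤ max (N : ℝ) q.length - lcs p q := by
  have hpX : p.Sublist (factor X 0 N) := hX ▸ factor_sublist_factor X 0 hp
  have hqY : (q.take N).Sublist (factor Y 0 N) := by
    rw [← hY, take_factor]
    exact factor_sublist_factor Y 0 (min_le_left _ _)
  have hlcs : lcs p q + N ≤ lcs (factor X 0 N) (factor Y 0 N) + max N q.length := by
    have htake := lcs_le_lcs_take_add p q N
    have hmono := lcs_mono hpX hqY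
    omega
  have hlcs_real : (lcs p q + N : ℝ) ≤
      lcs (factor X 0 N) (factor Y 0 N) + max (N : ℝ) q.length := mod_cast hlcs
  rw [levD_factor]
  linarith

end Levenshtein

section Feldman

variable {A : Type*}

theorem levD_factor_div_mem_Icc (x y : ℕ → A) (n : ℕ) :
    levD (factor x 0 n) (factor y 0 n) / n ∈ Set.Icc (0 : ℝ) 1 :=
  ⟨div_nonneg (levD_nonneg _ _) n.cast_nonneg,
    div_le_one_of_le₀ (levD_factor_le x y 0 0 n) n.cast_nonneg⟩

theorem isBoundedUnder_le_levD_factor_div (x y : ℕ → A) :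
    IsBoundedUnder (· ≤ ·) atTop fun n : ℕ => levD (factor x 0 n) (factor y 0 n) / n :=
  isBoundedUnder_of ⟨1, fun n => (levD_factor_div_mem_Icc x y n).2⟩

theorem feld_nonneg (x y : ℕ → A) : 0 ≤ feld x y :=
  le_limsup_of_frequently_le
    (Frequently.of_forall fun n => (levD_factor_div_mem_Icc x y n).1)
    (isBoundedUnder_le_levD_factor_div x y)

theorem feld_le_of_levD_factor_le {x y : ℕ → A} {c K : ℝ}
    (h : ∀ n : ℕ, levD (factor x 0 n) (factor y 0 n) ≤ c * n + K) : feld x y ≤ c := by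
  have hlim : Tendsto (fun n : ℕ => c + K / n) atTop (nhds c) := by
    simpa using tendsto_const_nhds.add (tendsto_const_div_atTop_nhds_zero_nat K)
  have hle : ∀ᶠ n : ℕ in atTop, levD (factor x 0 n) (factor y 0 n) / n ≤ c + K / n := by
    filter_upwards [eventually_gt_atTop 0] with n hn
    have hn_pos : (0 : ℝ) < n := mod_cast hn
    rw [div_le_iff₀ hn_pos, add_mul, div_mul_cancel₀ K hn_pos.ne']
    exact h n
  have hcobdd : IsCoboundedUnder (· ≤ ·) atTop
      fun n : ℕ => levD (factor x 0 n) (factor y 0 n) / n :=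
    (isBoundedUnder_of ⟨0, fun n => (levD_factor_div_mem_Icc x y n).1⟩).isCoboundedUnder_le
  calc feld x y ≤ limsup (fun n : ℕ => c + K / n) atTop :=
        limsup_le_limsup hle hcobdd hlim.isBoundedUnder_le
    _ = c := hlim.limsup_eq

theorem exists_levD_factor_le_of_feld_lt {x y : ℕ → A} {c : ℝ} (h : feld x y < c) :
    ∃ K : ℝ, ∀ n : ℕ, levD (factor x 0 n) (factor y 0 n) ≤ c * n + K := by
  have hc : 0 < c := (feld_nonneg x y).trans_lt h
  obtain ⟨m, hm⟩ := eventually_atTop.1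
    (eventually_lt_of_limsup_lt h (isBoundedUnder_le_levD_factor_div x y))
  refine ⟨m, fun n => ?_⟩
  rcases le_or_gt n m with hnm | hmn
  · calc levD (factor x 0 n) (factor y 0 n) ≤ n := levD_factor_le x y 0 0 n
      _ ≤ m := mod_cast hnm
      _ ≤ c * n + m := le_add_of_nonneg_left (by positivity)
  · have hn_pos : (0 : ℝ) < n := mod_cast m.zero_le.trans_lt hmn
    have hlt := (div_lt_iff₀ hn_pos).1 (hm n hmn.le)
    exact hlt.le.trans (le_add_of_nonneg_right m.cast_nonneg)

end Feldman

section Substitution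

variable {A B : Type*} {σ : A → List B}

theorem length_le_sSup_length [Finite A] (σ : A → List B) (a : A) :
    ((σ a).length : ℝ) ≤ sSup {n : ℝ | ∃ a : A, (σ a).length = n} :=
  le_csSup (Set.finite_range fun a : A => ((σ a).length : ℝ)).bddAbove ⟨a, rfl⟩

theorem length_flatMap_le_add_of_sublist {M : ℝ} (hM : ∀ a, ((σ a).length : ℝ) ≤ M)
    {w u : List A} (h : w.Sublist u) :
    ((u.flatMap σ).length : ℝ) ≤ (w.flatMap σ).length + M * (u.length - w.length) := by
  induction h with
  | slnil => simp
  | cons a _ ih =>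
    simp only [List.flatMap_cons, List.length_append, List.length_cons, Nat.cast_add, Nat.cast_one]
    linarith [hM a]
  | cons_cons a _ ih =>
    simp only [List.flatMap_cons, List.length_append, List.length_cons, Nat.cast_add, Nat.cast_one]
    linarith

theorem length_flatMap_le_lcs_add {M : ℝ} (hM : ∀ a, ((σ a).length : ℝ) ≤ M) (u v : List A) :
    ((u.flatMap σ).length : ℝ) ≤ lcs (u.flatMap σ) (v.flatMap σ) + M * (u.length - lcs u v) := by
  obtain ⟨w, hw, hwu, hwv⟩ := exists_sublist_length_eq_lcs u v
  have hle : ((w.flatMap σ).length : ℝ) ≤ lcs (u.flatMap σ) (v.flatMap σ) :=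
    mod_cast length_le_lcs (hwu.flatMap σ) (hwv.flatMap σ)
  have hdrop := length_flatMap_le_add_of_sublist hM hwu
  rw [hw] at hdrop
  linarith

theorem length_flatMap_factor_succ (σ : A → List B) (x : ℕ → A) (n : ℕ) :
    ((factor x 0 (n + 1)).flatMap σ).length =
      ((factor x 0 n).flatMap σ).length + (σ (x n)).length := by
  simp [factor_succ]

theorem mul_le_length_flatMap_factor {L : ℝ} {x : ℕ → A}
    (hx : ∀ i, L ≤ ((σ (x i)).length : ℝ)) (n : ℕ) :
    L * n ≤ ((factor x 0 n).flatMap σ).length := by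
  induction n with
  | zero => simp
  | succ n ih =>
    rw [length_flatMap_factor_succ]
    push_cast
    linarith [hx n]

theorem exists_length_flatMap_factor_le_lt {x : ℕ → A} (hx : ∀ i, 0 < (σ (x i)).length) (N : ℕ) :
    ∃ l, ((factor x 0 l).flatMap σ).length ≤ N ∧
      N < ((factor x 0 l).flatMap σ).length + (σ (x l)).length := by
  have hmono : StrictMono fun l => ((factor x 0 l).flatMap σ).length :=
    strictMono_nat_of_lt_succ fun l => by
      rw [length_flatMap_factor_succ]
      exact Nat.lt_add_of_pos_right (hx l)
  obtain ⟨l, hlt, hle⟩ :=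
    hmono.exists_between_of_tendsto_atTop hmono.tendsto_atTop (x := N + 1) (by simp)
  exact ⟨l, Nat.lt_succ_iff.1 hlt, length_flatMap_factor_succ σ x l ▸ hle⟩

/-- `X` is the image `σ̄(x) = σ(x₀)σ(x₁)⋯` of `x` under the substitution `σ`, expressed through
finite words: every `σ(x_[0,n))` is a prefix of `X`. If `σ(x_i)` is empty for all but finitely many
`i`, this only determines a prefix of `X`. -/
def IsSubstImage (σ : A → List B) (x : ℕ → A) (X : ℕ → B) : Prop :=
  ∀ n, factor X 0 ((factor x 0 n).flatMap σ).length = (factor x 0 n).flatMap σ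

theorem isSubstImage_singleton (x : ℕ → A) : IsSubstImage (fun a => [a]) x x := fun n => by
  simp

theorem IsSubstImage.comp {C : Type*} {τ : B → List C} {x : ℕ → A} {X : ℕ → B} {Z : ℕ → C}
    (hτ : IsSubstImage τ X Z) (hσ : IsSubstImage σ x X) :
    IsSubstImage (fun a => (σ a).flatMap τ) x Z := fun n => by
  rw [← List.flatMap_assoc, ← hσ n]
  exact hτ _

theorem isSubstImage_of_subCocycle {τ : A → List A} {z Z : ℕ → A}
    (h : ∀ (n k : ℕ) (hk : k < (τ (z n)).length),
      Z (subCocycle τ z n + k) = (τ (z n)).get ⟨k, hk⟩) :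
    IsSubstImage τ z Z := by
  have hlength : ∀ n, ((factor z 0 n).flatMap τ).length = subCocycle τ z n := by
    intro n
    induction n with
    | zero => simp [subCocycle]
    | succ n ih =>
      rw [length_flatMap_factor_succ, ih, subCocycle, subCocycle, Finset.sum_range_succ]
  intro n
  induction n with
  | zero => simp
  | succ n ih =>
    have hblock : factor Z (subCocycle τ z n) (τ (z n)).length = τ (z n) := by
      simp only [factor, h, Fin.eta, List.ofFn_get, Fin.is_lt]
    rw [length_flatMap_factor_succ, factor_add, ih, hlength, zero_add, hblock, factor_succ]
    simp

theorem IsSubstImage.iterate {τ : A → List A} {G : (ℕ → A) → ℕ → A}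
    (hG : ∀ z, IsSubstImage τ z (G z)) (t : ℕ) (z : ℕ → A) :
    IsSubstImage (tauPow τ t) z (G^[t] z) := by
  induction t with
  | zero => exact isSubstImage_singleton z
  | succ t ih =>
    rw [Function.iterate_succ_apply']
    exact (hG _).comp ih

end Substitution

namespace IsSubstImage

variable {A B : Type*} {σ : A → List B} {x y : ℕ → A} {X Y : ℕ → B} {M L : ℝ}

theorem levD_factor_le (hX : IsSubstImage σ x X) (hY : IsSubstImage σ y Y)
    (hM : ∀ a, ((σ a).length : ℝ) ≤ M) {l N : ℕ}
    (hlN : ((factor x 0 l).flatMap σ).length ≤ N)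
    (hNl : (N : ℝ) ≤ ((factor x 0 l).flatMap σ).length + M) :
    levD (factor X 0 N) (factor Y 0 N) ≤ M * levD (factor x 0 l) (factor y 0 l) + M := by
  set u := factor x 0 l with hu
  set v := factor y 0 l with hv
  have hσu : ((u.flatMap σ).length : ℝ) ≤
      lcs (u.flatMap σ) (v.flatMap σ) + M * levD u v := by
    simpa [hu, hv, levD_factor] using length_flatMap_le_lcs_add hM u v
  have hσv : ((v.flatMap σ).length : ℝ) ≤
      lcs (u.flatMap σ) (v.flatMap σ) + M * levD u v := by
    simpa [hu, hv, levD_factor, lcs_comm] using length_flatMap_le_lcs_add hM v u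
  have hM_nonneg : 0 ≤ M := (Nat.cast_nonneg _).trans (hM (x 0))
  calc levD (factor X 0 N) (factor Y 0 N)
      ≤ max (N : ℝ) (v.flatMap σ).length - lcs (u.flatMap σ) (v.flatMap σ) :=
        levD_factor_le_max_length_sub_lcs (hX l) (hY l) hlN
    _ ≤ M * levD u v + M := by
        rw [sub_le_iff_le_add']
        exact max_le (by linarith) (by linarith)

theorem feld_le (hX : IsSubstImage σ x X) (hY : IsSubstImage σ y Y)
    (hM : ∀ a, ((σ a).length : ℝ) ≤ M) (hL : 0 < L) (hx : ∀ i, L ≤ ((σ (x i)).length : ℝ)) :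
    feld X Y ≤ M / L * feld x y := by
  have hM_pos : 0 < M := hL.trans_le ((hx 0).trans (hM (x 0)))
  suffices h : ∀ c, feld x y < c → feld X Y ≤ M / L * c by
    rw [← div_le_iff₀' (div_pos hM_pos hL)]
    exact le_of_forall_gt_imp_ge_of_dense fun c hc =>
      (div_le_iff₀' (div_pos hM_pos hL)).2 (h c hc)
  intro c hc
  have hc_pos : 0 < c := (feld_nonneg x y).trans_lt hc
  obtain ⟨K, hK⟩ := exists_levD_factor_le_of_feld_lt hc
  refine feld_le_of_levD_factor_le (K := M * K + M) fun N => ?_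
  obtain ⟨l, hlN, hNl⟩ :=
    exists_length_flatMap_factor_le_lt (fun i => Nat.cast_pos.1 (hL.trans_le (hx i))) N
  have hNl_real : (N : ℝ) ≤ ((factor x 0 l).flatMap σ).length + M :=
    (mod_cast hNl.le : (N : ℝ) ≤ ((factor x 0 l).flatMap σ).length + (σ (x l)).length).trans
      (by gcongr; exact hM _)
  have hl : (l : ℝ) ≤ N / L := by
    rw [le_div_iff₀' hL]
    exact (mul_le_length_flatMap_factor hx l).trans (mod_cast hlN)
  calc levD (factor X 0 N) (factor Y 0 N)
      ≤ M * levD (factor x 0 l) (factor y 0 l) + M := hX.levD_factor_le hY hM hlN hNl_real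
    _ ≤ M * (c * l + K) + M := by gcongr; exact hK l
    _ ≤ M * (c * (N / L) + K) + M := by gcongr
    _ = M / L * c * N + (M * K + M) := by ring

theorem feld_iterate_le {τ : A → List A} {G : (ℕ → A) → ℕ → A}
    (hG : ∀ z, IsSubstImage τ z (G z)) {ρ α β : ℝ} (hρ : 0 < ρ) (hβ : 0 < β)
    (hα : ∀ (a : A) (t : ℕ), ((tauPow τ t a).length : ℝ) ≤ α * ρ ^ t)
    (hx : ∀ i t : ℕ, β * ρ ^ t ≤ ((tauPow τ t (x i)).length : ℝ)) (y : ℕ → A) (t : ℕ) :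
    feld (G^[t] x) (G^[t] y) ≤ α / β * feld x y := by
  have hρt : 0 < ρ ^ t := pow_pos hρ t
  rw [← mul_div_mul_right α β hρt.ne']
  exact (iterate hG t x).feld_le (iterate hG t y) (hα · t) (mul_pos hβ hρt) (hx · t)

end IsSubstImage

theorem substitution_feld_equicontinuous_point_general {A : Type*} (τ : A → List A)
    (G : (ℕ → A) → ℕ → A)
    (hG : ∀ (z : ℕ → A) (n k : ℕ) (h : k < (τ (z n)).length),
      G z (subCocycle τ z n + k) = (τ (z n)).get ⟨k, h⟩)
    (x : ℕ → A) :
    (∀ M L : ℝ, (∀ a, ((τ a).length : ℝ) ≤ M) → 0 < L → (∀ i, L ≤ ((τ (x i)).length : ℝ)) →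
      ∀ y : ℕ → A, feld (G x) (G y) ≤ M / L * feld x y) ∧
    (∀ ρ α β : ℝ, 0 < ρ → 0 < β →
      (∀ (a : A) (t : ℕ), ((tauPow τ t a).length : ℝ) ≤ α * ρ ^ t) →
      (∀ (i t : ℕ), β * ρ ^ t ≤ ((tauPow τ t (x i)).length : ℝ)) →
      (∀ (y : ℕ → A) (t : ℕ), feld (G^[t] x) (G^[t] y) ≤ (α / β) * feld x y) ∧
      (∀ ε : ℝ, 0 < ε → ∃ δ : ℝ, 0 < δ ∧
        ∀ y : ℕ → A, feld x y < δ → ∀ t : ℕ, feld (G^[t] x) (G^[t] y) < ε)) := by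
  have himage : ∀ z, IsSubstImage τ z (G z) := fun z => isSubstImage_of_subCocycle (hG z)
  refine ⟨fun M L hM hL hx y => (himage x).feld_le (himage y) hM hL hx,
    fun ρ α β hρ hβ hα hx => ?_⟩
  have hlip := IsSubstImage.feld_iterate_le himage hρ hβ hα hx
  have hα_pos : 0 < α := one_pos.trans_le (by simpa [tauPow] using hα (x 0) 0)
  refine ⟨hlip, fun ε hε => ⟨ε / (α / β), by positivity, fun y hy t => ?_⟩⟩
  exact (hlip y t).trans_lt ((lt_div_iff₀' (div_pos hα_pos hβ)).1 hy)

/-- Let `τ` be a substitution and `x` with `|τ(x_i)| ≥ L` for all `i` (`L > 0`). Then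
`𝔡_L(τ̄(x), τ̄(y)) ≤ (‖τ‖_max/L)·𝔡_L(x,y)` for all `y` (with `G = τ̄`). Consequently,
if `|τ^t(a)| ≤ α·ρ^t` for all letters `a` and `|τ^t(x_i)| ≥ β·ρ^t` for all `i, t`, then
`𝔡_L(τ̄^t(x), τ̄^t(y)) ≤ (α/β)·𝔡_L(x,y)` for all `y, t`; in particular `x` is an
equicontinuous point of `τ̄` in the Feldman space. -/
theorem substitution_feld_equicontinuous_point {A : Type*} [Fintype A] [Nonempty A]
    (τ : A → List A) (hτ : ∀ a, τ a ≠ [])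
    (G : (ℕ → A) → ℕ → A)
    (hG : ∀ (z : ℕ → A) (n k : ℕ) (h : k < (τ (z n)).length),
      G z (subCocycle τ z n + k) = (τ (z n)).get ⟨k, h⟩)
    (x : ℕ → A) (L : ℕ) (hL : 0 < L) (hx : ∀ i : ℕ, L ≤ (τ (x i)).length) :
    (∀ y : ℕ → A,
      feld (G x) (G y) ≤ ((sSup {n | ∃ a : A, (τ a).length = n} : ℝ) / L) * feld x y) ∧
    (∀ ρ α β : ℝ, 0 < ρ → 0 < α → 0 < β →
      (∀ (a : A) (t : ℕ), ((tauPow τ t a).length : ℝ) ≤ α * ρ ^ t) →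
      (∀ (i t : ℕ), β * ρ ^ t ≤ ((tauPow τ t (x i)).length : ℝ)) →
      (∀ (y : ℕ → A) (t : ℕ), feld (G^[t] x) (G^[t] y) ≤ (α / β) * feld x y) ∧
      (∀ ε : ℝ, 0 < ε → ∃ δ : ℝ, 0 < δ ∧
        ∀ y : ℕ → A, feld x y < δ → ∀ t : ℕ, feld (G^[t] x) (G^[t] y) < ε)) := by
  obtain ⟨hstep, hiterate⟩ := substitution_feld_equicontinuous_point_general τ G hG x
  exact ⟨hstep _ L (length_le_sSup_length τ) (mod_cast hL) (mod_cast hx),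
    fun ρ α β hρ _ => hiterate ρ α β hρ⟩
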